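/- Let X be a centered Gaussian process on [a,b] with almost surely twice continuously differentiable sample paths and twice continuously differentiable covariance r(s,t). Write r₁₀(t,t) = ∂_s r(s,t)|_{s=t} and r₁₁(t,t) = ∂_s∂_t r(s,t)|_{s=t}, and assume that for all t ∈ [a,b]: r(t,t) ≤ 1, r₁₀(t,t) < 0, r₁₁(t,t) > 0, and r₁₁(t,t) − r₁₀(t,t)²/r(t,t) > 0. Set χ₂ = min_{t∈[a,b]} r₁₀(t,t)²/r₁₁(t,t) > 0. Then there exists C > 0 such that for all u ≥ 1, E[N_u^+([a,b])] ≤ C e^{−u²(1+χ₂)/2}. -/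

import Mathlib

open MeasureTheory ProbabilityTheory Set
open scoped NNReal

lemma aux_gauss_Ico (v : ℝ≥0) (hv : v ≠ 0) (u l d : ℝ) (hu : 0 ≤ u) (hl : u ≤ l) :
    gaussianReal 0 v (Ico l (l + d)) ≤
      ENNReal.ofReal ((Real.sqrt (2 * Real.pi * v))⁻¹ * Real.exp (-u ^ 2 / (2 * v)))
        * ENNReal.ofReal d := by
  rw [gaussianReal_apply _ hv]
  calc ∫⁻ x in Ico l (l + d), gaussianPDF 0 v x
      ≤ ∫⁻ x in Ico l (l + d),
        ENNReal.ofReal ((Real.sqrt (2 * Real.pi * v))⁻¹ * Real.exp (-u ^ 2 / (2 * v))) := by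
        refine setLIntegral_mono (by fun_prop) fun x hx => ?_
        rw [gaussianPDF, gaussianPDFReal]
        apply ENNReal.ofReal_le_ofReal
        have : u ≤ x := hl.trans hx.1
        gcongr
        simpa using this
    _ = _ := by
        rw [setLIntegral_const, Real.volume_Ico, add_sub_cancel_left]

lemma aux_second_moment {Ω : Type*} [MeasurableSpace Ω] (P : Measure Ω) [IsProbabilityMeasure P]
    (Z : Ω → ℝ) (hZ : Measurable Z) (v : ℝ≥0) (h : Measure.map Z P = gaussianReal 0 v) :
    MemLp Z 2 P ∧ ∫ ω, Z ω ∂P = 0 ∧ ∫ ω, Z ω ^ 2 ∂P = v := by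
  have h1 : MemLp Z 2 P := by
    have := memLp_id_gaussianReal (μ := 0) (v := v) 2
    rw [← h, memLp_map_measure_iff (by fun_prop) (by fun_prop)] at this
    simpa using this
  have h2 : ∫ ω, Z ω ∂P = 0 := by
    have := integral_id_gaussianReal (μ := 0) (v := v)
    rwa [← h, integral_map (by fun_prop) (by fun_prop)] at this
  refine ⟨h1, h2, ?_⟩
  have := variance_id_gaussianReal (μ := 0) (v := v)
  rw [← h, variance_map (by fun_prop) (by fun_prop), variance_of_integral_eq_zero] at this
  · simpa using this
  · exact hZ.aemeasurable
  · simpa using h2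

lemma aux_pair {Ω : Type*} [MeasurableSpace Ω] (P : Measure Ω) [IsProbabilityMeasure P]
    (A B : Ω → ℝ) (hA : Measurable A) (hB : Measurable B)
    (hG : ∀ α β : ℝ, ∃ v : ℝ≥0, Measure.map (fun ω => α * A ω + β * B ω) P = gaussianReal 0 v)
    (h sg ρ l τ χ L u : ℝ) (hh : 0 < h) 
    (hsg : ∫ ω, A ω * A ω ∂P = sg)
    (hρ : ∫ ω, B ω * A ω ∂P = sg + h * ρ)
    (hl : ∫ ω, B ω * B ω ∂P = sg + 2 * h * ρ + h ^ 2 * l)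
    (hl0 : 0 < l) (hlL : l ≤ L) (hkh : h ≤ -ρ / l) (hsg1 : sg ≤ 1)
    (hτ : 0 < τ) (hτ1 : τ ≤ sg - ρ ^ 2 / l) (hχ : 0 < χ) (hχ1 : χ / (1 + χ) ≤ ρ ^ 2 / l)
    (hu : 0 ≤ u) :
    P {ω | A ω < u ∧ u ≤ B ω} ≤ ENNReal.ofReal (h * ((1 + L) * (Real.sqrt (2 * Real.pi * τ))⁻¹)
      * Real.exp (- (u ^ 2) * (1 + χ) / 2)) := by
  have hAA := hG 1 0
  have hBB := hG 0 1
  simp only [one_mul, zero_mul, add_zero, zero_add] at hAA hBB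
  obtain ⟨vA, hvA⟩ := hAA
  obtain ⟨vB, hvB⟩ := hBB
  obtain ⟨mA, eA, -⟩ := aux_second_moment P A hA vA hvA
  obtain ⟨mB, eB, -⟩ := aux_second_moment P B hB vB hvB
  have iAA : Integrable (fun ω => A ω * A ω) P := mA.integrable_mul mA
  have iBA : Integrable (fun ω => B ω * A ω) P := mB.integrable_mul mA
  have iBB : Integrable (fun ω => B ω * B ω) P := mB.integrable_mul mB
  have key : ∀ x y z : ℝ, ∫ ω, (x * (A ω * A ω) + y * (B ω * A ω) + z * (B ω * B ω)) ∂P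
      = x * sg + y * (sg + h * ρ) + z * (sg + 2 * h * ρ + h ^ 2 * l) := by
    intro x y z
    have i1 : Integrable (fun ω => x * (A ω * A ω) + y * (B ω * A ω)) P :=
      (iAA.const_mul x).add (iBA.const_mul y)
    rw [integral_add i1 (iBB.const_mul z),
      integral_add (iAA.const_mul x) (iBA.const_mul y), integral_const_mul, integral_const_mul,
      integral_const_mul, hsg, hρ, hl]
  set κ := ρ / l with hκ
  set Y : Ω → ℝ := fun ω => (B ω - A ω) / h with hY
  set W : Ω → ℝ := fun ω => A ω - κ * Y ω with hW
  have mY : Measurable Y := by fun_prop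
  have mW : Measurable W := by fun_prop
  have hYG : ∀ α β : ℝ, ∃ v : ℝ≥0, Measure.map (fun ω => α * Y ω + β * W ω) P
      = gaussianReal 0 v := by
    intro α β
    obtain ⟨v, hv⟩ := hG (-α / h + β * (1 + κ / h)) (α / h - β * κ / h)
    refine ⟨v, ?_⟩
    rw [← hv]
    congr 1
    ext ω
    simp only [hY, hW]
    field_simp
    ring
  have hYY := hYG 1 0
  have hWW := hYG 0 1
  simp only [one_mul, zero_mul, add_zero, zero_add] at hYY hWW
  obtain ⟨vY, hvY⟩ := hYY
  obtain ⟨vW, hvW⟩ := hWW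
  obtain ⟨m2Y, eY, sY⟩ := aux_second_moment P Y mY vY hvY
  obtain ⟨m2W, eW, sW⟩ := aux_second_moment P W mW vW hvW
  have sY' : (vY : ℝ) = l := by
    rw [← sY]
    have : ∀ ω, Y ω ^ 2 = 1 / h ^ 2 * (A ω * A ω) + (- 2 / h ^ 2) * (B ω * A ω)
      + 1 / h ^ 2 * (B ω * B ω) := by
      intro ω; simp only [hY]; field_simp; ring
    simp_rw [this, key]
    field_simp; ring
  have cYW : ∫ ω, Y ω * W ω ∂P = 0 := by
    have : ∀ ω, Y ω * W ω = (- 1 / h - κ / h ^ 2) * (A ω * A ω)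
      + (1 / h + 2 * κ / h ^ 2) * (B ω * A ω)
      + (- κ / h ^ 2) * (B ω * B ω) := by
      intro ω; simp only [hY, hW]; field_simp; ring
    simp_rw [this, key, hκ]
    field_simp; ring
  have sW' : (vW : ℝ) = sg - ρ ^ 2 / l := by
    rw [← sW]
    have : ∀ ω, W ω ^ 2 = (1 + κ / h) ^ 2 * (A ω * A ω)
      + (- 2 * (1 + κ / h) * κ / h) * (B ω * A ω)
      + (κ ^ 2 / h ^ 2) * (B ω * B ω) := by
      intro ω; simp only [hY, hW]; field_simp; ring
    simp_rw [this, key, hκ]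
    field_simp; ring
  have hvW0 : 0 < (vW : ℝ) := by rw [sW']; linarith
  have hvWne : vW ≠ 0 := by
    intro h0; simp [h0] at hvW0
  have hGL : HasGaussianLaw (fun ω => (Y ω, W ω)) P := by
    constructor
    refine isGaussian_of_map_eq_gaussianReal fun Λ => ?_
    obtain ⟨v, hv⟩ := hYG (Λ (1, 0)) (Λ (0, 1))
    refine ⟨0, v, ?_⟩
    rw [Measure.map_map (by fun_prop) (by fun_prop), ← hv]
    congr 1
    ext ω
    have : (Y ω, W ω) = Y ω • ((1, 0) : ℝ × ℝ) + W ω • ((0, 1) : ℝ × ℝ) := by simp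
    simp only [Function.comp]
    rw [this, map_add, map_smul, map_smul]
    simp [mul_comm]
  have hind : IndepFun Y W P := by
    apply hGL.indepFun_of_covariance_eq_zero
    rw [covariance_eq_sub m2Y m2W, eY, eW]
    simpa using cYW
  have hprod := (indepFun_iff_map_prod_eq_prod_map_map mY.aemeasurable mW.aemeasurable).1 hind
  rw [hvY, hvW] at hprod
  set T : Set (ℝ × ℝ) := {p | 0 < p.1 ∧ u - (κ + h) * p.1 ≤ p.2 ∧ p.2 < u - κ * p.1} with hT
  have mT : MeasurableSet T := by
    exact (measurableSet_lt measurable_const measurable_fst).inter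
      ((measurableSet_le (f := fun p : ℝ × ℝ => u - (κ + h) * p.1) (g := fun p => p.2)
        (by fun_prop) (by fun_prop)).inter
      (measurableSet_lt (f := fun p : ℝ × ℝ => p.2) (g := fun p => u - κ * p.1)
        (by fun_prop) (by fun_prop)))
  have hsub : {ω | A ω < u ∧ u ≤ B ω} ⊆ (fun ω => (Y ω, W ω)) ⁻¹' T := by
    rintro ω ⟨h1, h2⟩
    have hBY : B ω = A ω + h * Y ω := by simp only [hY]; field_simp; ring
    refine ⟨?_, ?_, ?_⟩
    · exact div_pos (by linarith) hh
    · simp only [hW]; linarith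
    · simp only [hW]; linarith
  have hκh : κ + h ≤ 0 := by rw [neg_div] at hkh; linarith
  set c := (Real.sqrt (2 * Real.pi * vW))⁻¹ * Real.exp (-u ^ 2 / (2 * vW)) with hc
  have hc0 : 0 ≤ c := by positivity
  have hslice : ∀ y : ℝ, gaussianReal 0 vW (Prod.mk y ⁻¹' T) ≤
      ENNReal.ofReal (c * h * (1 + y ^ 2)) := by
    intro y
    by_cases hy : 0 < y
    · have h1 : Prod.mk y ⁻¹' T ⊆ Ico (u - (κ + h) * y) (u - (κ + h) * y + h * y) := by
        rintro w ⟨-, h2, h3⟩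
        refine ⟨h2, ?_⟩
        simp only at h3
        linarith
      refine (measure_mono h1).trans ((aux_gauss_Ico vW hvWne u _ _ hu ?_).trans ?_)
      · nlinarith
      · rw [← ENNReal.ofReal_mul hc0]
        apply ENNReal.ofReal_le_ofReal
        have : y ≤ 1 + y ^ 2 := by nlinarith [sq_nonneg (y - 1)]
        rw [← mul_assoc]
        exact mul_le_mul_of_nonneg_left this (by positivity)
    · have : Prod.mk y ⁻¹' T = ∅ := by
        ext w; simp [hT]; intro h; exact absurd h hy
      simp [this]
  have hcb : c ≤ (Real.sqrt (2 * Real.pi * τ))⁻¹ * Real.exp (- (u ^ 2) * (1 + χ) / 2) := by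
    have h1 : τ ≤ vW := by rw [sW']; exact hτ1
    have h2 : (1 + χ) * vW ≤ 1 := by
      have : χ ≤ ρ ^ 2 / l * (1 + χ) := by rwa [div_le_iff₀ (by linarith)] at hχ1
      rw [sW']; nlinarith
    rw [hc]
    gcongr ?_ * ?_
    · gcongr
    · apply Real.exp_le_exp.2
      rw [div_le_div_iff₀ (by positivity) (by norm_num)]
      nlinarith [sq_nonneg u, mul_le_mul_of_nonneg_left h2 (sq_nonneg u)]
  calc P {ω | A ω < u ∧ u ≤ B ω} ≤ P ((fun ω => (Y ω, W ω)) ⁻¹' T) := measure_mono hsub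
    _ = (Measure.map (fun ω => (Y ω, W ω)) P) T := (Measure.map_apply (by fun_prop) mT).symm
    _ = ∫⁻ y, gaussianReal 0 vW (Prod.mk y ⁻¹' T) ∂(gaussianReal 0 vY) := by
        rw [hprod, Measure.prod_apply mT]
    _ ≤ ∫⁻ y, ENNReal.ofReal (c * h * (1 + y ^ 2)) ∂(gaussianReal 0 vY) := lintegral_mono hslice
    _ = ∫⁻ ω, ENNReal.ofReal (c * h * (1 + Y ω ^ 2)) ∂P := by
        rw [← hvY, lintegral_map (by fun_prop) mY]
    _ = ENNReal.ofReal (∫ ω, (c * h * (1 + Y ω ^ 2)) ∂P) := by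
        rw [ofReal_integral_eq_lintegral_ofReal]
        · exact ((integrable_const _).add m2Y.integrable_sq).const_mul _
        · exact Filter.Eventually.of_forall fun ω => by positivity
    _ = ENNReal.ofReal (c * h * (1 + l)) := by
        rw [integral_const_mul, integral_add (integrable_const _) m2Y.integrable_sq, sY, sY']
        simp
    _ ≤ _ := by
        apply ENNReal.ofReal_le_ofReal
        calc c * h * (1 + l) ≤ ((Real.sqrt (2 * Real.pi * τ))⁻¹ *
              Real.exp (- (u ^ 2) * (1 + χ) / 2)) * h * (1 + L) := by gcongr
          _ = _ := by ring

open Filter Topology in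
lemma aux_local (f : ℝ → ℝ) (a b u t : ℝ) (hft : f t = u)
    (hd : 0 < derivWithin f (Icc a b) t) :
    ∀ᶠ ε in 𝓝[>] (0 : ℝ), ∀ s ∈ Icc a b,
      (t - ε < s → s < t → f s < u) ∧ (t ≤ s → s < t + ε → u ≤ f s) := by
  have h1 : DifferentiableWithinAt ℝ f (Icc a b) t := by
    by_contra h
    rw [derivWithin_zero_of_not_differentiableWithinAt h] at hd
    exact lt_irrefl _ hd
  have h2 := h1.hasDerivWithinAt
  rw [hasDerivWithinAt_iff_tendsto_slope] at h2
  have h3 := h2.eventually (lt_mem_nhds hd)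
  rw [eventually_nhdsWithin_iff, Metric.eventually_nhds_iff] at h3
  obtain ⟨δ, hδ, h3⟩ := h3
  filter_upwards [Ioo_mem_nhdsGT hδ] with ε hε s hs
  constructor
  · intro h4 h5
    have := h3 (y := s) (by rw [Real.dist_eq, abs_lt]; constructor <;> linarith [hε.1, hε.2])
      ⟨hs, by simpa using h5.ne⟩
    rw [slope_def_field, div_pos_iff] at this
    rcases this with h | h <;> linarith [h.1, h.2]
  · intro h4 h5
    rcases h4.eq_or_lt with h4 | h4
    · rw [← h4, hft]
    have := h3 (y := s) (by rw [Real.dist_eq, abs_lt]; constructor <;> linarith [hε.1, hε.2])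
      ⟨hs, by simpa using h4.ne'⟩
    rw [slope_def_field, div_pos_iff] at this
    rcases this with h | h <;> linarith [h.1, h.2]

open Filter Topology in
lemma aux_count (f : ℝ → ℝ) (a b u : ℝ) (hab : a < b) (hfa : f a ≠ u) (S : Set ℝ)
    (hS : S = {t ∈ Icc a b | f t = u ∧ 0 < derivWithin f (Icc a b) t}) :
    ∀ᶠ n : ℕ in atTop, S.ncard ≤ ((Finset.range n).filter (fun i : ℕ =>
      f (a + i * ((b - a) / n)) < u ∧ u ≤ f (a + (i + 1) * ((b - a) / n)))).card := by
  by_cases hfin : S.Finite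
  swap
  · rw [Set.Infinite.ncard hfin]; simp
  have h1 : ∀ᶠ ε in 𝓝[>] (0 : ℝ), ∀ t ∈ S, ∀ s ∈ Icc a b,
      (t - ε < s → s < t → f s < u) ∧ (t ≤ s → s < t + ε → u ≤ f s) := by
    rw [eventually_all_finite hfin]
    intro t ht
    rw [hS] at ht
    exact aux_local f a b u t ht.2.1 ht.2.2
  obtain ⟨ε, hε, hε0⟩ := (h1.and self_mem_nhdsWithin).exists
  have hε0 : 0 < ε := hε0
  have h2 : ∀ᶠ n : ℕ in atTop, (b - a) / n < ε :=
    (tendsto_const_div_atTop_nhds_zero_nat (b - a)).eventually (gt_mem_nhds hε0)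
  filter_upwards [h2, eventually_gt_atTop 0] with n hn hn0
  have hn0' : (0 : ℝ) < n := by exact_mod_cast hn0
  set m := (b - a) / n with hm
  have hm0 : 0 < m := div_pos (by linarith) hn0'
  have hnm : n * m = b - a := by rw [hm]; field_simp
  have key : ∀ t ∈ S, ∃ i : ℕ, i < n ∧ a + i * m < t ∧ t ≤ a + (i + 1) * m := by
    intro t ht
    rw [hS] at ht
    have hat : a < t := lt_of_le_of_ne ht.1.1 (fun h => hfa (h ▸ ht.2.1))
    have hpos : 0 < (t - a) / m := div_pos (by linarith) hm0
    have hc : 0 < ⌈(t - a) / m⌉₊ := Nat.ceil_pos.2 hpos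
    obtain ⟨i, hi⟩ : ∃ i, ⌈(t - a) / m⌉₊ = i + 1 := ⟨_, (Nat.succ_pred_eq_of_pos hc).symm⟩
    have hi1 : (i : ℝ) < (t - a) / m := by
      rw [← Nat.lt_ceil]; omega
    have hi2 : (t - a) / m ≤ i + 1 := by
      have := Nat.le_ceil ((t - a) / m)
      rw [hi] at this; exact_mod_cast this
    rw [lt_div_iff₀ hm0] at hi1
    rw [div_le_iff₀ hm0] at hi2
    refine ⟨i, ?_, by linarith, by linarith⟩
    have h5 : (i : ℝ) * m < n * m := by rw [hnm]; linarith [ht.1.2]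
    exact_mod_cast lt_of_mul_lt_mul_right h5 hm0.le
  choose! φ hφ using key
  rw [Set.ncard_eq_toFinset_card S hfin]
  refine Finset.card_le_card_of_injOn φ ?_ ?_
  · intro t ht
    have ht : t ∈ S := by simpa using ht
    obtain ⟨h3, h4, h5⟩ := hφ t ht
    have htI : t ∈ Icc a b := by rw [hS] at ht; exact ht.1
    have h6 : (φ t : ℝ) + 1 ≤ n := by exact_mod_cast h3
    have h7 : ((φ t : ℝ) + 1) * m ≤ b - a := by rw [← hnm]; gcongr
    have h8 : 0 ≤ (φ t : ℝ) * m := by positivity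
    simp only [Finset.coe_filter, Finset.mem_range, mem_ofPred_eq]
    refine ⟨h3, ?_, ?_⟩
    · exact (hε t ht _ ⟨by linarith, by linarith [htI.2]⟩).1 (by linarith) h4
    · exact (hε t ht _ ⟨by linarith, by linarith⟩).2 h5 (by linarith)
  · have main : ∀ t ∈ S, ∀ t' ∈ S, φ t = φ t' → ¬ t < t' := by
      intro t ht t' ht' he hlt
      obtain ⟨-, h4, h5⟩ := hφ t ht
      obtain ⟨-, h4', h5'⟩ := hφ t' ht'
      rw [← he] at h5'
      have htI := ht
      rw [hS] at htI
      have := (hε t' ht' t htI.1).1 (by linarith) hlt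
      linarith [htI.2.1]
    intro t ht t' ht' he
    have ht : t ∈ S := by simpa using ht
    have ht' : t' ∈ S := by simpa using ht'
    rcases lt_trichotomy t t' with h | h | h
    · exact absurd h (main t ht t' ht' he)
    · exact h
    · exact absurd h (main t' ht' t ht he.symm)

open Filter Topology in
lemma aux_expect {Ω : Type*} [MeasurableSpace Ω] (P : Measure Ω) [IsProbabilityMeasure P]
    (a b : ℝ) (hab : a < b) (X : ℝ → Ω → ℝ) (hX : ∀ t, Measurable (X t)) (u K : ℝ)
    (hK : 0 ≤ K)
    (ha : ∀ᵐ ω ∂P, X a ω ≠ u) (h0 : ℝ) (hh0 : 0 < h0)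
    (hb : ∀ t h, 0 < h → h < h0 → a ≤ t → t + h ≤ b →
      P {ω | X t ω < u ∧ u ≤ X (t + h) ω} ≤ ENNReal.ofReal (h * K)) :
    (∫ ω, ((Set.ncard {t ∈ Set.Icc a b |
          X t ω = u ∧ 0 < derivWithin (fun s => X s ω) (Set.Icc a b) t} : ℕ) : ℝ) ∂P)
        ≤ (b - a) * K := by
  classical
  set N : Ω → ℕ := fun ω => Set.ncard {t ∈ Set.Icc a b |
          X t ω = u ∧ 0 < derivWithin (fun s => X s ω) (Set.Icc a b) t} with hN
  set E : ℕ → ℕ → Set Ω := fun n i => {ω | X (a + i * ((b - a) / n)) ω < u ∧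
    u ≤ X (a + (i + 1) * ((b - a) / n)) ω} with hE
  have mE : ∀ n i, MeasurableSet (E n i) := fun n i =>
    (measurableSet_lt (hX _) measurable_const).inter (measurableSet_le measurable_const (hX _))
  set F : ℕ → Ω → ENNReal := fun n ω => ∑ i ∈ Finset.range n, (E n i).indicator 1 ω with hF
  have mF : ∀ n, Measurable (F n) := fun n =>
    Finset.measurable_sum _ fun i _ => measurable_one.indicator (mE n i)
  have hmain : ∫⁻ ω, (N ω : ENNReal) ∂P ≤ ENNReal.ofReal ((b - a) * K) := by
    calc ∫⁻ ω, (N ω : ENNReal) ∂P ≤ ∫⁻ ω, liminf (fun n => F n ω) atTop ∂P := by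
          apply lintegral_mono_ae
          filter_upwards [ha] with ω hω
          refine le_liminf_of_le (by isBoundedDefault) ?_
          filter_upwards [aux_count (fun s => X s ω) a b u hab hω _ rfl] with n hn
          have : F n ω = (((Finset.range n).filter (fun i : ℕ =>
              X (a + i * ((b - a) / n)) ω < u ∧
                u ≤ X (a + (i + 1) * ((b - a) / n)) ω)).card : ENNReal) := by
            simp only [hF, hE, Set.indicator_apply, Finset.card_filter, mem_ofPred_eq,
              Pi.one_apply, Nat.cast_sum, Nat.cast_ite, Nat.cast_one, Nat.cast_zero]
          rw [this]
          exact_mod_cast hn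
      _ ≤ liminf (fun n => ∫⁻ ω, F n ω ∂P) atTop := lintegral_liminf_le mF
      _ ≤ ENNReal.ofReal ((b - a) * K) := by
          refine liminf_le_of_le (by isBoundedDefault) ?_
          intro c hc
          have h2 : ∀ᶠ n : ℕ in atTop, (b - a) / n < h0 :=
            (tendsto_const_div_atTop_nhds_zero_nat (b - a)).eventually (gt_mem_nhds hh0)
          obtain ⟨n, hn, hn1, hn2⟩ := (hc.and (h2.and (eventually_gt_atTop 0))).exists
          refine hn.trans ?_
          have hn0' : (0 : ℝ) < n := by exact_mod_cast hn2
          have hm0 : 0 < (b - a) / n := div_pos (by linarith) hn0'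
          have hnm : n * ((b - a) / n) = b - a := by field_simp
          simp only [hF]
          rw [lintegral_finsetSum _ fun i _ => measurable_one.indicator (mE n i)]
          calc ∑ i ∈ Finset.range n, ∫⁻ ω, (E n i).indicator 1 ω ∂P
              ≤ ∑ i ∈ Finset.range n, ENNReal.ofReal (((b - a) / n) * K) := by
                refine Finset.sum_le_sum fun i hi => ?_
                rw [lintegral_indicator_one (mE n i)]
                have hi' : (i : ℝ) + 1 ≤ n := by exact_mod_cast Finset.mem_range.1 hi
                have h7 : ((i : ℝ) + 1) * ((b - a) / n) ≤ b - a := by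
                  nth_rw 2 [← hnm]; gcongr
                have h8 : 0 ≤ (i : ℝ) * ((b - a) / n) := by positivity
                have h9 := hb (a + i * ((b - a) / n)) ((b - a) / n) hm0 hn1 (by linarith)
                  (by linarith)
                have h10 : a + i * ((b - a) / n) + (b - a) / n = a + (i + 1) * ((b - a) / n) := by
                  ring
                rwa [h10] at h9
            _ = ENNReal.ofReal ((b - a) * K) := by
                rw [Finset.sum_const, Finset.card_range, nsmul_eq_mul,
                  ← ENNReal.ofReal_natCast, ← ENNReal.ofReal_mul (by positivity), ← mul_assoc, hnm]
  have hnn : 0 ≤ (b - a) * K := mul_nonneg (by linarith) hK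
  by_cases hmeas : AEStronglyMeasurable (fun ω => (N ω : ℝ)) P
  · rw [integral_eq_lintegral_of_nonneg_ae (Eventually.of_forall fun ω => by simp) hmeas]
    apply ENNReal.toReal_le_of_le_ofReal hnn
    simpa using hmain
  · rw [integral_undef (fun h => hmeas h.1)]
    exact hnn

open Filter Topology in
lemma aux_cov (a b : ℝ) (hab : a < b) (r : ℝ → ℝ → ℝ) (hsym : ∀ s t, r s t = r t s)
    (hrC2 : ContDiffOn ℝ 2 (fun q : ℝ × ℝ => r q.1 q.2) (Set.Icc a b ×ˢ Set.Icc a b))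
    (hr10 : ∀ t ∈ Set.Icc a b, deriv (fun s => r s t) t < 0)
    (hr11 : ∀ t ∈ Set.Icc a b, 0 < deriv (fun s => deriv (fun t' => r s t') t) t) :
    ∃ f1 f11 : ℝ × ℝ → ℝ, ContinuousOn f1 (Icc a b ×ˢ Icc a b) ∧
      ContinuousOn f11 (Icc a b ×ˢ Icc a b) ∧
      (∀ s ∈ Icc a b, ∀ t ∈ Icc a b,
        HasDerivWithinAt (fun s => r s t) (f1 (s, t)) (Icc a b) s) ∧
      (∀ s ∈ Icc a b, ∀ t ∈ Icc a b,
        HasDerivWithinAt (fun t => f1 (s, t)) (f11 (s, t)) (Icc a b) t) ∧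
      (∀ t ∈ Icc a b, deriv (fun s => r s t) t = f1 (t, t)) ∧
      (∀ t ∈ Icc a b, deriv (fun s => deriv (fun t' => r s t') t) t = f11 (t, t)) := by
  set S := Icc a b ×ˢ Icc a b with hS
  set f : ℝ × ℝ → ℝ := fun q => r q.1 q.2 with hf
  have hU1 : UniqueDiffOn ℝ (Icc a b) := uniqueDiffOn_Icc hab
  have hU : UniqueDiffOn ℝ S := hU1.prod hU1
  set f1 : ℝ × ℝ → ℝ := fun p => fderivWithin ℝ f S p (1, 0) with hf1
  have c1 : ContDiffOn ℝ 1 f1 S := by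
    have : ContDiffOn ℝ 1 (fderivWithin ℝ f S) S :=
      hrC2.fderivWithin hU (by norm_num)
    exact this.clm_apply contDiffOn_const
  set f11 : ℝ × ℝ → ℝ := fun p => fderivWithin ℝ f1 S p (0, 1) with hf11
  have c11 : ContinuousOn f11 S := by
    have : ContinuousOn (fderivWithin ℝ f1 S) S :=
      c1.continuousOn_fderivWithin hU (by norm_num)
    exact this.clm_apply continuousOn_const
  have d1 : ∀ s ∈ Icc a b, ∀ t ∈ Icc a b,
        HasDerivWithinAt (fun s => r s t) (f1 (s, t)) (Icc a b) s := by
    intro s hs t ht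
    have h1 : HasFDerivWithinAt f (fderivWithin ℝ f S (s, t)) S (s, t) :=
      ((hrC2.differentiableOn (by norm_num)) (s, t) ⟨hs, ht⟩).hasFDerivWithinAt
    have h2 : HasDerivWithinAt (fun s : ℝ => (s, t)) ((1, 0) : ℝ × ℝ) (Icc a b) s :=
      (hasDerivWithinAt_id s _).prodMk (hasDerivWithinAt_const s _ t)
    have h3 : MapsTo (fun s : ℝ => (s, t)) (Icc a b) S := fun x hx => ⟨hx, ht⟩
    exact h1.comp_hasDerivWithinAt s h2 h3
  have d11 : ∀ s ∈ Icc a b, ∀ t ∈ Icc a b,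
        HasDerivWithinAt (fun t => f1 (s, t)) (f11 (s, t)) (Icc a b) t := by
    intro s hs t ht
    have h1 : HasFDerivWithinAt f1 (fderivWithin ℝ f1 S (s, t)) S (s, t) :=
      ((c1.differentiableOn (by norm_num)) (s, t) ⟨hs, ht⟩).hasFDerivWithinAt
    have h2 : HasDerivWithinAt (fun t : ℝ => (s, t)) ((0, 1) : ℝ × ℝ) (Icc a b) t :=
      (hasDerivWithinAt_const t _ s).prodMk (hasDerivWithinAt_id t _)
    have h3 : MapsTo (fun t : ℝ => (s, t)) (Icc a b) S := fun x hx => ⟨hs, hx⟩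
    exact h1.comp_hasDerivWithinAt t h2 h3
  have e1 : ∀ s ∈ Icc a b, ∀ t ∈ Icc a b, deriv (fun t' => r t' s) t ≠ 0 →
      deriv (fun t' => r t' s) t = f1 (t, s) := by
    intro s hs t ht h
    have h1 := (differentiableAt_of_deriv_ne_zero h).hasDerivAt.hasDerivWithinAt (s := Icc a b)
    exact (hU1 t ht).eq_deriv _ h1 (d1 t ht s hs)
  refine ⟨f1, f11, c1.continuousOn, c11, d1, d11, ?_, ?_⟩
  · intro t ht
    exact e1 t ht t ht (hr10 t ht).ne
  · intro t ht
    have hg : (fun s => deriv (fun t' => r s t') t) = fun s => deriv (fun t' => r t' s) t := by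
      funext s
      congr 1
      funext t'
      exact hsym _ _
    have h0 := hr11 t ht
    rw [hg] at h0 ⊢
    have hda := (differentiableAt_of_deriv_ne_zero h0.ne')
    have hneg : ∀ᶠ s in 𝓝 t, deriv (fun t' => r t' s) t < 0 :=
      hda.continuousAt.eventually (gt_mem_nhds (hr10 t ht))
    have heq : (fun s => f1 (t, s)) =ᶠ[𝓝[Icc a b] t] fun s => deriv (fun t' => r t' s) t := by
      filter_upwards [nhdsWithin_le_nhds hneg, self_mem_nhdsWithin] with s hs hsI
      exact (e1 s hsI t ht hs.ne).symm
    have h1 := hda.hasDerivAt.hasDerivWithinAt (s := Icc a b)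
    have h2 := h1.congr_of_eventuallyEq heq (e1 t ht t ht (hr10 t ht).ne).symm
    exact (hU1 t ht).eq_deriv _ h2 (d11 t ht t ht)

lemma aux_mvt (a b : ℝ) (g g' : ℝ → ℝ) (hg : ∀ s ∈ Icc a b, HasDerivWithinAt g (g' s) (Icc a b) s)
    (x h : ℝ) (hh : 0 < h) (hx : a ≤ x) (hy : x + h ≤ b) :
    ∃ p ∈ Icc x (x + h), g (x + h) = g x + h * g' p := by
  obtain ⟨p, hp, he⟩ := exists_hasDerivAt_eq_slope g g' (a := x) (b := x + h) (by linarith)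
    (fun s hs => ((hg s ⟨hx.trans hs.1, hs.2.trans hy⟩).continuousWithinAt).mono
      (Icc_subset_Icc hx hy))
    (fun s hs => (hg s ⟨by linarith [hs.1], by linarith [hs.2]⟩).hasDerivAt
      (Icc_mem_nhds (by linarith [hs.1]) (by linarith [hs.2])))
  refine ⟨p, ⟨hp.1.le, hp.2.le⟩, ?_⟩
  rw [he, add_sub_cancel_left]
  field_simp
  ring

lemma aux_mvt2 (a b : ℝ) (r : ℝ → ℝ → ℝ) (f1 f11 : ℝ × ℝ → ℝ)
    (d1 : ∀ s ∈ Icc a b, ∀ t ∈ Icc a b,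
        HasDerivWithinAt (fun s => r s t) (f1 (s, t)) (Icc a b) s)
    (d11 : ∀ s ∈ Icc a b, ∀ t ∈ Icc a b,
        HasDerivWithinAt (fun t => f1 (s, t)) (f11 (s, t)) (Icc a b) t)
    (x h : ℝ) (hh : 0 < h) (hx : a ≤ x) (hy : x + h ≤ b) :
    ∃ s ∈ Icc x (x + h), ∃ q ∈ Icc x (x + h),
      r (x + h) (x + h) - r (x + h) x - (r x (x + h) - r x x) = h ^ 2 * f11 (s, q) := by
  obtain ⟨s, hs, he⟩ := aux_mvt a b (fun s => r s (x + h) - r s x)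
    (fun s => f1 (s, x + h) - f1 (s, x))
    (fun s hs => (d1 s hs _ ⟨by linarith, hy⟩).sub (d1 s hs _ ⟨hx, by linarith⟩)) x h hh hx hy
  obtain ⟨q, hq, he'⟩ := aux_mvt a b (fun t => f1 (s, t)) (fun t => f11 (s, t))
    (d11 s ⟨hx.trans hs.1, hs.2.trans hy⟩) x h hh hx hy
  refine ⟨s, hs, q, hq, ?_⟩
  rw [he'] at he
  linarith

open Filter Topology in
lemma aux_unif (a b : ℝ) (r : ℝ → ℝ → ℝ) (f1 f11 : ℝ × ℝ → ℝ) (χ τ L : ℝ)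
    (hc : ContinuousOn (fun q : ℝ × ℝ => r q.1 q.2) (Icc a b ×ˢ Icc a b))
    (c1 : ContinuousOn f1 (Icc a b ×ˢ Icc a b)) (c11 : ContinuousOn f11 (Icc a b ×ˢ Icc a b))
    (hχ : 0 < χ) (h1 : ∀ t ∈ Icc a b, f1 (t, t) < 0) (h11 : ∀ t ∈ Icc a b, 0 < f11 (t, t))
    (hq : ∀ t ∈ Icc a b, χ ≤ f1 (t, t) ^ 2 / f11 (t, t))
    (hL : ∀ t ∈ Icc a b, f11 (t, t) < L)
    (hτ : ∀ t ∈ Icc a b, τ < r t t - f1 (t, t) ^ 2 / f11 (t, t)) :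
    ∃ h0 > 0, ∀ h, 0 < h → h < h0 → ∀ t ∈ Icc a b,
      ∀ p ∈ Icc a b, ∀ s ∈ Icc a b, ∀ q ∈ Icc a b, |p - t| ≤ h → |s - t| ≤ h → |q - t| ≤ h →
      0 < f11 (s, q) ∧ f11 (s, q) ≤ L ∧ h ≤ - f1 (p, t) / f11 (s, q) ∧
      τ ≤ r t t - f1 (p, t) ^ 2 / f11 (s, q) ∧ χ / (1 + χ) ≤ f1 (p, t) ^ 2 / f11 (s, q) := by
  set Φ : ℝ → ℝ → ℝ × ℝ × ℝ → Prop := fun h t z =>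
      0 < f11 (z.2.1, z.2.2) ∧ f11 (z.2.1, z.2.2) < L ∧ h < - f1 (z.1, t) / f11 (z.2.1, z.2.2) ∧
      τ < r t t - f1 (z.1, t) ^ 2 / f11 (z.2.1, z.2.2) ∧
      χ / (1 + χ) < f1 (z.1, t) ^ 2 / f11 (z.2.1, z.2.2) with hΦ
  have hloc : ∀ t0 ∈ Icc a b, ∀ᶠ w : ℝ × ℝ × ℝ × ℝ × ℝ in
      𝓝[univ ×ˢ Icc a b ×ˢ Icc a b ×ˢ Icc a b ×ˢ Icc a b] (0, t0, t0, t0, t0),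
      Φ w.1 w.2.1 w.2.2 := by
    intro t0 ht0
    set D : Set (ℝ × ℝ × ℝ × ℝ × ℝ) := univ ×ˢ Icc a b ×ˢ Icc a b ×ˢ Icc a b ×ˢ Icc a b with hD
    have mem : ((0, t0, t0, t0, t0) : ℝ × ℝ × ℝ × ℝ × ℝ) ∈ D :=
      ⟨mem_univ _, ht0, ht0, ht0, ht0⟩
    have k0 : ContinuousWithinAt (fun w : ℝ × ℝ × ℝ × ℝ × ℝ => r w.2.1 w.2.1) D
        (0, t0, t0, t0, t0) := by
      have : ContinuousOn (fun w : ℝ × ℝ × ℝ × ℝ × ℝ => r w.2.1 w.2.1) D :=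
        hc.comp (f := fun w : ℝ × ℝ × ℝ × ℝ × ℝ => (w.2.1, w.2.1)) (by fun_prop)
          (fun w hw => ⟨hw.2.1, hw.2.1⟩)
      exact this _ mem
    have k1 : ContinuousWithinAt (fun w : ℝ × ℝ × ℝ × ℝ × ℝ => f1 (w.2.2.1, w.2.1)) D
        (0, t0, t0, t0, t0) := by
      have : ContinuousOn (fun w : ℝ × ℝ × ℝ × ℝ × ℝ => f1 (w.2.2.1, w.2.1)) D :=
        c1.comp (f := fun w : ℝ × ℝ × ℝ × ℝ × ℝ => (w.2.2.1, w.2.1)) (by fun_prop)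
          (fun w hw => ⟨hw.2.2.1, hw.2.1⟩)
      exact this _ mem
    have k11 : ContinuousWithinAt (fun w : ℝ × ℝ × ℝ × ℝ × ℝ => f11 (w.2.2.2.1, w.2.2.2.2)) D
        (0, t0, t0, t0, t0) := by
      have : ContinuousOn (fun w : ℝ × ℝ × ℝ × ℝ × ℝ => f11 (w.2.2.2.1, w.2.2.2.2)) D :=
        c11.comp (f := fun w : ℝ × ℝ × ℝ × ℝ × ℝ => (w.2.2.2.1, w.2.2.2.2)) (by fun_prop)
          (fun w hw => ⟨hw.2.2.2.1, hw.2.2.2.2⟩)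
      exact this _ mem
    have kh : ContinuousWithinAt (fun w : ℝ × ℝ × ℝ × ℝ × ℝ => w.1) D
        (0, t0, t0, t0, t0) := continuousWithinAt_fst
    have p11 := h11 t0 ht0
    have p1 := h1 t0 ht0
    have kq := (k1.pow 2).div k11 p11.ne'
    have E1 := k11.eventually (lt_mem_nhds p11)
    have E2 := k11.eventually (gt_mem_nhds (hL t0 ht0))
    have E3 := ((k1.neg.div k11 p11.ne').sub kh).eventually
      (lt_mem_nhds (a := 0) (by
        have := div_pos (neg_pos.2 p1) p11
        simpa using this))
    have E4 := (k0.sub kq).eventually (lt_mem_nhds (hτ t0 ht0))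
    have E5 := kq.eventually (lt_mem_nhds (a := χ / (1 + χ)) (by
      refine lt_of_lt_of_le ?_ (hq t0 ht0)
      rw [div_lt_iff₀ (by linarith)]
      nlinarith))
    filter_upwards [E1, E2, E3, E4, E5] with w w1 w2 w3 w4 w5
    exact ⟨w1, w2, by linarith [show (0:ℝ) < - f1 (w.2.2.1, w.2.1) / f11 (w.2.2.2.1, w.2.2.2.2) - w.1 from w3], w4, w5⟩
  have hev : ∀ᶠ h in 𝓝 (0 : ℝ), ∀ t ∈ Icc a b, (t ∈ Icc a b → ∀ p ∈ Icc a b, ∀ s ∈ Icc a b,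
      ∀ q ∈ Icc a b, |p - t| ≤ h → |s - t| ≤ h → |q - t| ≤ h → Φ h t (p, s, q)) := by
    apply isCompact_Icc.eventually_forall_of_forall_eventually
    intro t0 ht0
    have := hloc t0 ht0
    rw [eventually_nhdsWithin_iff, Metric.eventually_nhds_iff] at this
    obtain ⟨ε, hε, this⟩ := this
    rw [Metric.eventually_nhds_iff]
    refine ⟨ε / 2, by linarith, ?_⟩
    rintro ⟨h, t⟩ hht ht p hp s hs q hq hp' hs' hq'
    simp only [Prod.dist_eq, max_lt_iff, Real.dist_eq, sub_zero] at hht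
    simp only at ht hp' hs' hq'
    have hh := (abs_lt.1 hht.1)
    have ht' := (abs_lt.1 hht.2)
    rw [abs_le] at hp' hs' hq'
    refine this (y := (h, t, p, s, q)) ?_ ⟨mem_univ _, ht, hp, hs, hq⟩
    simp only [Prod.dist_eq, max_lt_iff, Real.dist_eq, sub_zero, abs_lt]
    refine ⟨⟨?_, ?_⟩, ⟨?_, ?_⟩, ⟨?_, ?_⟩, ⟨?_, ?_⟩, ?_, ?_⟩ <;> linarith
  rw [Metric.eventually_nhds_iff] at hev
  obtain ⟨h0, hh0, hev⟩ := hev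
  refine ⟨h0, hh0, fun h hpos hlt t ht p hp s hs q hq hp' hs' hq' => ?_⟩
  obtain ⟨a1, a2, a3, a4, a5⟩ := hev (y := h) (by simpa [abs_of_pos hpos] using hlt) t ht ht
    p hp s hs q hq hp' hs' hq'
  exact ⟨a1, a2.le, a3.le, a4.le, a5.le⟩

theorem statement17
    {Ω : Type*} [MeasurableSpace Ω] (P : Measure Ω) [IsProbabilityMeasure P]
    (a b : ℝ) (hab : a < b)
    (X : ℝ → Ω → ℝ)
    (hjm : Measurable (Function.uncurry X))
    (hGauss : ∀ (n : ℕ) (c : Fin n → ℝ) (t : Fin n → ℝ),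
      (∀ i, t i ∈ Set.Icc a b) →
      ∃ v : ℝ≥0, Measure.map (fun ω => ∑ i, c i * X (t i) ω) P = gaussianReal 0 v)
    (hpaths : ∀ᵐ ω ∂P, ContDiffOn ℝ 2 (fun t => X t ω) (Set.Icc a b))
    (r : ℝ → ℝ → ℝ)
    (hr : ∀ s t, r s t = ∫ ω, X s ω * X t ω ∂P)
    (hrC2 : ContDiffOn ℝ 2 (fun q : ℝ × ℝ => r q.1 q.2) (Set.Icc a b ×ˢ Set.Icc a b))
    (hvar : ∀ t ∈ Set.Icc a b, r t t ≤ 1)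
    (hr10 : ∀ t ∈ Set.Icc a b, deriv (fun s => r s t) t < 0)
    (hr11 : ∀ t ∈ Set.Icc a b, 0 < deriv (fun s => deriv (fun t' => r s t') t) t)
    (hd2 : ∀ t ∈ Set.Icc a b,
      0 < deriv (fun s => deriv (fun t' => r s t') t) t
            - (deriv (fun s => r s t) t) ^ 2 / r t t) :
    0 < sInf ((fun t => (deriv (fun s => r s t) t) ^ 2
        / deriv (fun s => deriv (fun t' => r s t') t) t) '' Set.Icc a b) ∧
    ∃ C > (0:ℝ), ∀ u : ℝ, 1 ≤ u →
      (∫ ω, ((Set.ncard {t ∈ Set.Icc a b |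
          X t ω = u ∧ 0 < derivWithin (fun s => X s ω) (Set.Icc a b) t} : ℕ) : ℝ) ∂P)
        ≤ C * Real.exp (-(u ^ 2) *
            (1 + sInf ((fun t => (deriv (fun s => r s t) t) ^ 2
              / deriv (fun s => deriv (fun t' => r s t') t) t) '' Set.Icc a b)) / 2) := by
  have hsym : ∀ s t, r s t = r t s := by
    intro s t; rw [hr, hr]; simp_rw [mul_comm]
  have hX : ∀ t, Measurable (X t) := fun t => hjm.comp measurable_prodMk_left
  have hG2 : ∀ s ∈ Icc a b, ∀ t ∈ Icc a b, ∀ α β : ℝ, ∃ v : ℝ≥0,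
      Measure.map (fun ω => α * X s ω + β * X t ω) P = gaussianReal 0 v := by
    intro s hs t ht α β
    obtain ⟨v, hv⟩ := hGauss 2 ![α, β] ![s, t] (by
      intro i; fin_cases i <;> simpa)
    refine ⟨v, ?_⟩
    rw [← hv]
    congr 1
    ext ω
    simp [Fin.sum_univ_two]
  have hG1 : ∀ t ∈ Icc a b, ∃ v : ℝ≥0, Measure.map (X t) P = gaussianReal 0 v := by
    intro t ht
    obtain ⟨v, hv⟩ := hG2 t ht t ht 1 0
    exact ⟨v, by simpa using hv⟩
  have hrpos : ∀ t ∈ Icc a b, 0 < r t t := by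
    intro t ht
    obtain ⟨v, hv⟩ := hG1 t ht
    obtain ⟨m2, -, -⟩ := aux_second_moment P (X t) (hX t) v hv
    have h0 : 0 ≤ r t t := by
      rw [hr]; exact integral_nonneg fun ω => mul_self_nonneg _
    refine lt_of_le_of_ne h0 fun h => ?_
    rw [hr, eq_comm, integral_eq_zero_iff_of_nonneg (fun ω => mul_self_nonneg _)
      (m2.integrable_mul m2)] at h
    have h2 : (fun s => r s t) = fun _ => 0 := by
      funext s
      rw [hr]
      apply integral_eq_zero_of_ae
      filter_upwards [h] with ω hω
      have : X t ω = 0 := by simpa using hω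
      simp [this]
    have := hr10 t ht
    rw [h2] at this
    simp at this
  obtain ⟨f1, f11, c1, c11, d1, d11, e1, e11⟩ := aux_cov a b hab r hsym hrC2 hr10 hr11
  have himg : ((fun t => (deriv (fun s => r s t) t) ^ 2
        / deriv (fun s => deriv (fun t' => r s t') t) t) '' Set.Icc a b)
      = (fun t => f1 (t, t) ^ 2 / f11 (t, t)) '' Icc a b := by
    apply image_congr
    intro t ht
    simp only [e1 t ht, e11 t ht]
  rw [himg]
  replace hr10 : ∀ t ∈ Icc a b, f1 (t, t) < 0 := fun t ht => e1 t ht ▸ hr10 t ht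
  replace hr11 : ∀ t ∈ Icc a b, 0 < f11 (t, t) := fun t ht => e11 t ht ▸ hr11 t ht
  replace hd2 : ∀ t ∈ Icc a b, 0 < r t t - f1 (t, t) ^ 2 / f11 (t, t) := by
    intro t ht
    have h := hd2 t ht
    rw [e1 t ht, e11 t ht, sub_pos, div_lt_iff₀ (hrpos t ht)] at h
    rw [sub_pos, div_lt_iff₀ (hr11 t ht)]
    linarith
  have hne : (Icc a b).Nonempty := nonempty_Icc.2 hab.le
  have hdiag : ContinuousOn (fun t : ℝ => (t, t)) (Icc a b) := by fun_prop
  have mdiag : MapsTo (fun t : ℝ => (t, t)) (Icc a b) (Icc a b ×ˢ Icc a b) := fun t ht => ⟨ht, ht⟩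
  have k0 : ContinuousOn (fun t => r t t) (Icc a b) := hrC2.continuousOn.comp hdiag mdiag
  have k1 : ContinuousOn (fun t => f1 (t, t)) (Icc a b) := c1.comp hdiag mdiag
  have k11 : ContinuousOn (fun t => f11 (t, t)) (Icc a b) := c11.comp hdiag mdiag
  have kq : ContinuousOn (fun t => f1 (t, t) ^ 2 / f11 (t, t)) (Icc a b) :=
    (k1.pow 2).div k11 fun t ht => (hr11 t ht).ne'
  set χ := sInf ((fun t => f1 (t, t) ^ 2 / f11 (t, t)) '' Icc a b) with hχdef
  have hcomp := isCompact_Icc.image_of_continuousOn kq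
  have hχ : 0 < χ := by
    obtain ⟨t, ht, he⟩ := hcomp.sInf_mem (hne.image _)
    rw [hχdef, ← he]
    exact div_pos (sq_pos_of_neg (hr10 t ht)) (hr11 t ht)
  have hq : ∀ t ∈ Icc a b, χ ≤ f1 (t, t) ^ 2 / f11 (t, t) := fun t ht =>
    csInf_le hcomp.bddBelow (mem_image_of_mem _ ht)
  obtain ⟨tL, htL, hL⟩ := isCompact_Icc.exists_isMaxOn hne k11
  obtain ⟨tτ, htτ, hτ⟩ := isCompact_Icc.exists_isMinOn hne (k0.sub kq)
  set L := f11 (tL, tL) + 1 with hLdef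
  set τ := (r tτ tτ - f1 (tτ, tτ) ^ 2 / f11 (tτ, tτ)) / 2 with hτdef
  have hτ0 : 0 < τ := half_pos (hd2 tτ htτ)
  have hL0 : 0 < L := by have := hr11 tL htL; linarith
  obtain ⟨h0, hh0, hunif⟩ := aux_unif a b r f1 f11 χ τ L hrC2.continuousOn c1 c11 hχ hr10 hr11 hq
    (fun t ht => by
      have : f11 (t, t) ≤ f11 (tL, tL) := hL ht
      linarith)
    (fun t ht => by
      have : r tτ tτ - f1 (tτ, tτ) ^ 2 / f11 (tτ, tτ) ≤ r t t - f1 (t, t) ^ 2 / f11 (t, t) := hτ ht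
      have := hd2 tτ htτ
      linarith)
  refine ⟨hχ, (b - a) * ((1 + L) * (Real.sqrt (2 * Real.pi * τ))⁻¹), ?_, ?_⟩
  · have : 0 < b - a := by linarith
    positivity
  intro u hu
  rw [mul_assoc]
  have haI : a ∈ Icc a b := ⟨le_rfl, hab.le⟩
  refine aux_expect P a b hab X hX u _ (by positivity) ?_ h0 hh0 ?_
  · obtain ⟨v, hv⟩ := hG1 a haI
    obtain ⟨-, -, s2⟩ := aux_second_moment P (X a) (hX a) v hv
    have hv0 : v ≠ 0 := by
      intro h
      have := hrpos a haI
      rw [hr] at this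
      simp_rw [← pow_two] at this
      rw [s2, h] at this
      simp at this
    have h1 : gaussianReal 0 v {u} = 0 :=
      gaussianReal_absolutelyContinuous 0 hv0 (by simp)
    rw [← hv, Measure.map_apply (hX a) (measurableSet_singleton u)] at h1
    rw [ae_iff]
    convert h1 using 2
    ext ω
    simp
  · intro t h hh hlt hat htb
    have ht : t ∈ Icc a b := ⟨hat, by linarith⟩
    have hth : t + h ∈ Icc a b := ⟨by linarith, htb⟩
    obtain ⟨p, hp, ep⟩ := aux_mvt a b (fun s => r s t) (fun s => f1 (s, t))
      (fun s hs => d1 s hs t ht) t h hh hat htb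
    obtain ⟨s, hs, q, hq', esq⟩ := aux_mvt2 a b r f1 f11 d1 d11 t h hh hat htb
    have hI : ∀ x ∈ Icc t (t + h), x ∈ Icc a b ∧ |x - t| ≤ h := by
      intro x hx
      refine ⟨⟨hat.trans hx.1, hx.2.trans htb⟩, ?_⟩
      rw [abs_le]; constructor <;> linarith [hx.1, hx.2]
    obtain ⟨g1, g2, g3, g4, g5⟩ := hunif h hh hlt t ht p (hI p hp).1 s (hI s hs).1 q (hI q hq').1
      (hI p hp).2 (hI s hs).2 (hI q hq').2
    have := aux_pair P (X t) (X (t + h)) (hX _) (hX _) (hG2 t ht _ hth) h (r t t) (f1 (p, t))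
      (f11 (s, q)) τ χ L u hh (hr t t).symm (by rw [← hr]; exact ep)
      (by rw [← hr]; rw [hsym t (t + h)] at esq; linarith)
      g1 g2 g3 (hvar t ht) hτ0 g4 hχ g5 (by linarith)
    rwa [mul_assoc h] at this
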